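/- Let G̃ and G be groups, π : G̃ → G a surjective group homomorphism whose kernel K is contained in the center of G̃, F̃ : G̃ → G̃ a group homomorphism with F̃(K) ⊆ K, and F : G → G a group homomorphism with F ∘ π = π ∘ F̃. Assume the Lang map of G̃ is surjective, i.e. for every x ∈ G̃ there exists z ∈ G̃ with x = z^{−1}·F̃(z). Define 𝓛(K) = { z^{−1}·F̃(z) : z ∈ K }, a subgroup of K. Then the assignment sending g ∈ G^F to the coset (g̃^{−1}·F̃(g̃))·𝓛(K), for any choice of g̃ ∈ G̃ with π(g̃) = g, is a well-defined surjective group homomorphism G^F → K/𝓛(K) whose kernel is π(G̃^{F̃}); consequently it induces a group isomorphism G^F / π(G̃^{F̃}) ≅ K / 𝓛(K). -/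

import Mathlib

/-!
Since `K = ker π` is central, the Lang map `x ↦ x⁻¹ * Ft x` restricts to a homomorphism on
`π⁻¹(G^F) = {x | x⁻¹ * Ft x ∈ K}`, with values in `K`. It sends `K` onto `𝓛(K)`, so it descends to
`G^F → K/𝓛(K)`. Two elements have the same Lang value iff they differ by a fixed point, so
`x⁻¹ * Ft x ∈ 𝓛(K)` iff `x` is a fixed point times an element of `K`; this computes the kernel.
-/

/-- The fixed-point subgroup `G^F = { g : G | F g = g }` of a group endomorphism `F`. -/
def fixedSubgroup {G : Type*} [Group G] (F : G →* G) : Subgroup G where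
  carrier := {g : G | F g = g}
  one_mem' := map_one F
  mul_mem' := by
    intro a b ha hb
    show F (a * b) = a * b
    rw [map_mul, ha, hb]
  inv_mem' := by
    intro a ha
    show F a⁻¹ = a⁻¹
    rw [map_inv]
    exact congrArg Inv.inv ha

/-- `𝓛(K) = { z⁻¹·F̃(z) : z ∈ K }` where `K = ker π`; it is a subgroup of `G̃` since
`K` is central. -/
def langSubgroup {Gt G : Type*} [Group Gt] [Group G] (π : Gt →* G) (Ft : Gt →* Gt)
    (hker : π.ker ≤ Subgroup.center Gt) : Subgroup Gt where
  carrier := {w : Gt | ∃ z ∈ π.ker, w = z⁻¹ * Ft z}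
  one_mem' := ⟨1, π.ker.one_mem, by simp⟩
  mul_mem' := by
    intro x y hx hy
    obtain ⟨a, ha, rfl⟩ := hx
    obtain ⟨b, hb, rfl⟩ := hy
    refine ⟨a * b, π.ker.mul_mem ha hb, ?_⟩
    have h1 : Ft a * b⁻¹ = b⁻¹ * Ft a :=
      Subgroup.mem_center_iff.mp (hker (π.ker.inv_mem hb)) (Ft a)
    have h2 : a⁻¹ * b⁻¹ = b⁻¹ * a⁻¹ :=
      Subgroup.mem_center_iff.mp (hker (π.ker.inv_mem hb)) a⁻¹
    calc a⁻¹ * Ft a * (b⁻¹ * Ft b)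
        = a⁻¹ * (Ft a * b⁻¹) * Ft b := by group
      _ = a⁻¹ * (b⁻¹ * Ft a) * Ft b := by rw [h1]
      _ = a⁻¹ * b⁻¹ * (Ft a * Ft b) := by group
      _ = b⁻¹ * a⁻¹ * (Ft a * Ft b) := by rw [h2]
      _ = (a * b)⁻¹ * Ft (a * b) := by rw [map_mul, mul_inv_rev]
  inv_mem' := by
    intro x hx
    obtain ⟨z, hz, rfl⟩ := hx
    refine ⟨z⁻¹, π.ker.inv_mem hz, ?_⟩
    have h1 : (Ft z)⁻¹ * z = z * (Ft z)⁻¹ :=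
      Subgroup.mem_center_iff.mp (hker hz) (Ft z)⁻¹
    calc (z⁻¹ * Ft z)⁻¹ = (Ft z)⁻¹ * z := by group
      _ = z * (Ft z)⁻¹ := h1
      _ = (z⁻¹)⁻¹ * Ft z⁻¹ := by rw [inv_inv, map_inv]

/-- `𝓛(K)` is a normal subgroup of `K = ker π` (everything is central). -/
theorem langSubgroup_subgroupOf_normal {Gt G : Type*} [Group Gt] [Group G]
    (π : Gt →* G) (Ft : Gt →* Gt) (hker : π.ker ≤ Subgroup.center Gt) :
    ((langSubgroup π Ft hker).subgroupOf π.ker).Normal := by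
  constructor
  intro n hn g
  have hc : (g : Gt) * (n : Gt) = (n : Gt) * (g : Gt) :=
    Subgroup.mem_center_iff.mp (hker n.2) g
  have hgn : g * n * g⁻¹ = n := by
    apply Subtype.ext
    push_cast
    rw [hc]
    group
  rwa [hgn]

theorem inv_mul_map_mul_of_mem_center {H : Type*} [Group H] (f : H →* H) {a : H}
    (ha : a⁻¹ * f a ∈ Subgroup.center H) (b : H) :
    (a * b)⁻¹ * f (a * b) = a⁻¹ * f a * (b⁻¹ * f b) :=
  calc (a * b)⁻¹ * f (a * b)
      = b⁻¹ * (a⁻¹ * f a) * f b := by rw [map_mul]; group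
    _ = a⁻¹ * f a * (b⁻¹ * f b) := by rw [Subgroup.mem_center_iff.mp ha b⁻¹, mul_assoc]

/-- The Lang map `x ↦ x⁻¹ * f x` as a homomorphism `A →* Z`, on a subgroup `A` which it sends into
a central subgroup `Z`. -/
def langHom {H : Type*} [Group H] (f : H →* H) {A Z : Subgroup H} (hZ : Z ≤ Subgroup.center H)
    (hA : ∀ x ∈ A, x⁻¹ * f x ∈ Z) : A →* Z :=
  MonoidHom.mk' (fun x => ⟨(x : H)⁻¹ * f x, hA x x.2⟩) fun x y =>
    Subtype.ext (inv_mul_map_mul_of_mem_center f (hZ (hA x x.2)) y)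

theorem inv_mul_map_eq_iff_mul_inv_mem_fixedSubgroup {H : Type*} [Group H] (f : H →* H) (x z : H) :
    x⁻¹ * f x = z⁻¹ * f z ↔ x * z⁻¹ ∈ fixedSubgroup f := by
  change _ ↔ f (x * z⁻¹) = x * z⁻¹
  rw [map_mul, map_inv, mul_inv_eq_iff_eq_mul, inv_mul_eq_iff_eq_mul, mul_assoc]

theorem subgroupComap_surjective_of_le_range {H G : Type*} [Group H] [Group G] (π : H →* G)
    {A : Subgroup G} (hA : A ≤ π.range) : Function.Surjective (π.subgroupComap A) := by
  rintro ⟨g, hg⟩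
  obtain ⟨x, rfl⟩ := hA hg
  exact ⟨⟨x, hg⟩, rfl⟩

section CentralExtension

variable {Gt G : Type*} [Group Gt] [Group G] {π : Gt →* G} {Ft : Gt →* Gt} {F : G →* G}

theorem map_mem_fixedSubgroup_iff (hcomm : ∀ x, F (π x) = π (Ft x)) (x : Gt) :
    π x ∈ fixedSubgroup F ↔ x⁻¹ * Ft x ∈ π.ker := by
  change F (π x) = π x ↔ _
  rw [MonoidHom.mem_ker, map_mul, map_inv, inv_mul_eq_one, hcomm, eq_comm]

theorem inv_mul_map_mem_langSubgroup_iff (hker : π.ker ≤ Subgroup.center Gt) (x : Gt) :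
    x⁻¹ * Ft x ∈ langSubgroup π Ft hker ↔ π x ∈ (fixedSubgroup Ft).map π := by
  change (∃ z ∈ π.ker, x⁻¹ * Ft x = z⁻¹ * Ft z) ↔ _
  simp only [inv_mul_map_eq_iff_mul_inv_mem_fixedSubgroup, Subgroup.mem_map]
  constructor
  · rintro ⟨z, hz, hfix⟩
    exact ⟨x * z⁻¹, hfix, by rw [map_mul, map_inv, MonoidHom.mem_ker.mp hz, inv_one, mul_one]⟩
  · rintro ⟨y, hfix, hyx⟩
    exact ⟨y⁻¹ * x, (MonoidHom.eq_iff π).mp hyx.symm, by simpa using hfix⟩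

attribute [local instance] langSubgroup_subgroupOf_normal

/-- The Lang map modulo `𝓛(K)`, on the preimage `π⁻¹(G^F)`. -/
def langHomModLang (hker : π.ker ≤ Subgroup.center Gt) (hcomm : ∀ x, F (π x) = π (Ft x)) :
    (fixedSubgroup F).comap π →* π.ker ⧸ (langSubgroup π Ft hker).subgroupOf π.ker :=
  (QuotientGroup.mk' _).comp
    (langHom Ft hker fun x hx => (map_mem_fixedSubgroup_iff hcomm x).mp hx)

theorem langHomModLang_eq_one_iff (hker : π.ker ≤ Subgroup.center Gt)
    (hcomm : ∀ x, F (π x) = π (Ft x)) (x : (fixedSubgroup F).comap π) :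
    langHomModLang hker hcomm x = 1 ↔ π x ∈ (fixedSubgroup Ft).map π :=
  (QuotientGroup.eq_one_iff _).trans (inv_mul_map_mem_langSubgroup_iff hker (x : Gt))

theorem ker_subgroupComap_le_ker_langHomModLang (hker : π.ker ≤ Subgroup.center Gt)
    (hcomm : ∀ x, F (π x) = π (Ft x)) :
    (π.subgroupComap (fixedSubgroup F)).ker ≤ (langHomModLang hker hcomm).ker := by
  intro x hx
  have hπx : π x = 1 := congrArg Subtype.val hx
  rw [MonoidHom.mem_ker, langHomModLang_eq_one_iff, hπx]
  exact one_mem _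

/-- The connecting homomorphism `G^F → K/𝓛(K)`, `π x ↦ (x⁻¹ * Ft x)·𝓛(K)`, obtained by descending
`langHomModLang` along `π⁻¹(G^F) → G^F`. -/
noncomputable def langConnectingHom (hker : π.ker ≤ Subgroup.center Gt)
    (hcomm : ∀ x, F (π x) = π (Ft x)) (hlift : fixedSubgroup F ≤ π.range) :
    fixedSubgroup F →* π.ker ⧸ (langSubgroup π Ft hker).subgroupOf π.ker :=
  (π.subgroupComap (fixedSubgroup F)).liftOfSurjective
    (subgroupComap_surjective_of_le_range π hlift)
    ⟨langHomModLang hker hcomm, ker_subgroupComap_le_ker_langHomModLang hker hcomm⟩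

theorem langConnectingHom_subgroupComap (hker : π.ker ≤ Subgroup.center Gt)
    (hcomm : ∀ x, F (π x) = π (Ft x)) (hlift : fixedSubgroup F ≤ π.range)
    (x : (fixedSubgroup F).comap π) :
    langConnectingHom hker hcomm hlift (π.subgroupComap _ x) = langHomModLang hker hcomm x :=
  MonoidHom.liftOfRightInverse_comp_apply _ _ _ _ x

theorem langConnectingHom_apply (hker : π.ker ≤ Subgroup.center Gt)
    (hcomm : ∀ x, F (π x) = π (Ft x)) (hlift : fixedSubgroup F ≤ π.range)
    (g : fixedSubgroup F) (x : Gt) (hx : π x = g) (hmem : x⁻¹ * Ft x ∈ π.ker) :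
    langConnectingHom hker hcomm hlift g = QuotientGroup.mk ⟨x⁻¹ * Ft x, hmem⟩ := by
  obtain ⟨_, hg⟩ := g
  subst hx
  exact langConnectingHom_subgroupComap hker hcomm hlift ⟨x, hg⟩

theorem langConnectingHom_surjective (hker : π.ker ≤ Subgroup.center Gt)
    (hcomm : ∀ x, F (π x) = π (Ft x)) (hlift : fixedSubgroup F ≤ π.range)
    (hLang : ∀ x ∈ π.ker, ∃ z, x = z⁻¹ * Ft z) :
    Function.Surjective (langConnectingHom hker hcomm hlift) := by
  intro q
  obtain ⟨⟨k, hk⟩, rfl⟩ := QuotientGroup.mk_surjective q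
  obtain ⟨z, rfl⟩ := hLang k hk
  exact ⟨⟨π z, (map_mem_fixedSubgroup_iff hcomm z).mpr hk⟩,
    langConnectingHom_apply hker hcomm hlift _ z rfl hk⟩

theorem ker_langConnectingHom (hker : π.ker ≤ Subgroup.center Gt)
    (hcomm : ∀ x, F (π x) = π (Ft x)) (hlift : fixedSubgroup F ≤ π.range) :
    (langConnectingHom hker hcomm hlift).ker =
      ((fixedSubgroup Ft).map π).subgroupOf (fixedSubgroup F) := by
  ext g
  obtain ⟨x, rfl⟩ := subgroupComap_surjective_of_le_range π hlift g
  rw [MonoidHom.mem_ker, langConnectingHom_subgroupComap, langHomModLang_eq_one_iff]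
  rfl

end CentralExtension

theorem statement16_general {Gt G : Type*} [Group Gt] [Group G] (π : Gt →* G)
    (hker : π.ker ≤ Subgroup.center Gt) (Ft : Gt →* Gt) (F : G →* G)
    (hcomm : ∀ x : Gt, F (π x) = π (Ft x)) (hlift : fixedSubgroup F ≤ π.range)
    (hLang : ∀ x ∈ π.ker, ∃ z : Gt, x = z⁻¹ * Ft z) :
    letI := langSubgroup_subgroupOf_normal π Ft hker
    ∃ φ : fixedSubgroup F →* (π.ker ⧸ (langSubgroup π Ft hker).subgroupOf π.ker),
      (∀ (g : fixedSubgroup F) (gt : Gt) (_ : π gt = (g : G))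
          (hmem : gt⁻¹ * Ft gt ∈ π.ker),
        φ g = QuotientGroup.mk ⟨gt⁻¹ * Ft gt, hmem⟩) ∧
      Function.Surjective φ ∧
      φ.ker = ((fixedSubgroup Ft).map π).subgroupOf (fixedSubgroup F) ∧
      ∀ [_h : (((fixedSubgroup Ft).map π).subgroupOf (fixedSubgroup F)).Normal],
        Nonempty
          ((fixedSubgroup F ⧸ ((fixedSubgroup Ft).map π).subgroupOf (fixedSubgroup F)) ≃*
            (π.ker ⧸ (langSubgroup π Ft hker).subgroupOf π.ker)) := by
  let := langSubgroup_subgroupOf_normal π Ft hker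
  have hφsurj := langConnectingHom_surjective hker hcomm hlift hLang
  have hφker := ker_langConnectingHom hker hcomm hlift
  exact ⟨langConnectingHom hker hcomm hlift, langConnectingHom_apply hker hcomm hlift,
    hφsurj, hφker,
    ⟨QuotientGroup.liftEquiv _ hφsurj hφker.symm⟩⟩

/-- Lemma `lemma:finfactor`: with `π : G̃ → G` surjective with central kernel
`K`, `F̃(K) ⊆ K`, `F ∘ π = π ∘ F̃`, and the Lang map of `G̃` surjective, the assignment
`g ↦ (g̃⁻¹·F̃(g̃))·𝓛(K)` is a well-defined surjective homomorphism `G^F → K/𝓛(K)` with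
kernel `π(G̃^{F̃})`, inducing `G^F / π(G̃^{F̃}) ≅ K / 𝓛(K)`. -/
theorem statement16 {Gt G : Type*} [Group Gt] [Group G] (π : Gt →* G)
    (hsurj : Function.Surjective π) (hker : π.ker ≤ Subgroup.center Gt)
    (Ft : Gt →* Gt) (hFtK : ∀ z ∈ π.ker, Ft z ∈ π.ker)
    (F : G →* G) (hcomm : ∀ x : Gt, F (π x) = π (Ft x))
    (hLang : ∀ x : Gt, ∃ z : Gt, x = z⁻¹ * Ft z) :
    letI := langSubgroup_subgroupOf_normal π Ft hker
    ∃ φ : fixedSubgroup F →* (π.ker ⧸ (langSubgroup π Ft hker).subgroupOf π.ker),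
      (∀ (g : fixedSubgroup F) (gt : Gt) (_ : π gt = (g : G))
          (hmem : gt⁻¹ * Ft gt ∈ π.ker),
        φ g = QuotientGroup.mk ⟨gt⁻¹ * Ft gt, hmem⟩) ∧
      Function.Surjective φ ∧
      φ.ker = ((fixedSubgroup Ft).map π).subgroupOf (fixedSubgroup F) ∧
      ∀ [_h : (((fixedSubgroup Ft).map π).subgroupOf (fixedSubgroup F)).Normal],
        Nonempty
          ((fixedSubgroup F ⧸ ((fixedSubgroup Ft).map π).subgroupOf (fixedSubgroup F)) ≃*
            (π.ker ⧸ (langSubgroup π Ft hker).subgroupOf π.ker)) := by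
  exact statement16_general π hker Ft F hcomm (fun g _ => hsurj g) fun x _ => hLang x
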